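/- For every sorted parking function p of size n with shape λ(p) having ℓ parts, the number of sign vectors σ̄ ∈ {-1,0,1}^n making (p, σ̄) a sorted naive shifted parking function is 2^ℓ; consequently, the number of sorted naive shifted parking functions of size n with shape μ is 2^{ℓ(μ)} · Krew(μ). -/

import Mathlib

open Finset

/-- `p` is a sorted parking function of size `n`: weakly increasing with
`1 ≤ p i ≤ i` (1-indexed). -/
def IsSortedPF (n : ℕ) (p : Fin n → ℕ) : Prop :=
  Monotone p ∧ ∀ i : Fin n, 0 < p i ∧ p i ≤ (i : ℕ) + 1

/-- `σ̄ ∈ {-1,0,1}ⁿ` is a valid sign vector for `p`: `σ̄_k = 0` iff no entry of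
`p` equals `k`. -/
def IsSignVector (n : ℕ) (p : Fin n → ℕ) (σ : Fin n → ℤ) : Prop :=
  ∀ k : Fin n, (σ k = -1 ∨ σ k = 0 ∨ σ k = 1) ∧
    (σ k = 0 ↔ ∀ j : Fin n, p j ≠ (k : ℕ) + 1)

/-- The shape of `p`: the multiset of the positive multiplicities
`α_k(p) = #{j : p_j = k}`, `k = 1, …, n`. -/
def shapeOf (n : ℕ) (p : Fin n → ℕ) : Multiset ℕ :=
  Multiset.filter (fun m => 0 < m)
    (Multiset.map (fun k => (Finset.univ.filter fun j => p j = k).card) (Icc 1 n).val)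

/-- The Kreweras number of a partition `μ ⊢ n`. -/
noncomputable def krew (n : ℕ) (μ : n.Partition) : ℚ :=
  (1 / ((n : ℚ) - μ.parts.card + 1)) * (n.factorial : ℚ) /
    ((∏ i ∈ Icc 1 n, ((μ.parts.count i).factorial : ℚ)) *
      ((n - μ.parts.card).factorial : ℚ))

/-!
Put `N = n + 1` and record a sorted parking function by its content, the cyclic word
`c : ZMod N → ℕ` of its multiplicities `α₁, …, αₙ, 0`. Sorted parking functions of size `n` are
then the words of total `n` whose partial sums satisfy `α₁ + ⋯ + αₖ ≥ k` for `k ≤ n`, and the shape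
is the multiset of letters with the zeros removed. By the cycle lemma every word of total `n` has
exactly one rotation with this property, so parking functions of shape `μ` are a fraction `1 / N` of
the `N! / (∏ mᵢ! · (N - ℓ)!)` arrangements of the parts of `μ` and `N - ℓ` zeros; this is `Krew(μ)`.
A sign vector is a free choice of sign at each of the `ℓ` values taken by `p`.
-/

section PadZeros

/-- The multiset `s`, completed by zeros to a multiset of cardinality `N` (provided that
`card s ≤ N`). -/
def padZeros (N : ℕ) (s : Multiset ℕ) : Multiset ℕ :=
  s + Multiset.replicate (N - s.card) 0

lemma filter_pos_eq_iff_eq_padZeros {s t : Multiset ℕ} (ht : 0 ∉ t) :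
    s.filter (0 < ·) = t ↔ s = padZeros s.card t := by
  have hfilter : t.filter (0 < ·) = t :=
    Multiset.filter_eq_self.2 fun a ha => Nat.pos_of_ne_zero fun h => ht (h ▸ ha)
  constructor
  · rintro rfl
    have hzeros : s.filter (¬ 0 < ·) = Multiset.replicate (s.count 0) 0 := by
      rw [← Multiset.filter_eq']
      simp
    have hsplit := Multiset.filter_add_not (0 < ·) s
    rw [hzeros] at hsplit
    have hcard := congrArg Multiset.card hsplit
    rw [Multiset.card_add, Multiset.card_replicate] at hcard
    rw [padZeros, ← hcard, Nat.add_sub_cancel_left, hsplit]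
  · intro h
    rw [h, padZeros, Multiset.filter_add, hfilter]
    simp [Multiset.filter_eq_nil, Multiset.mem_replicate]

variable {N : ℕ} {s : Multiset ℕ}

lemma sum_padZeros : (padZeros N s).sum = s.sum := by
  simp [padZeros]

lemma card_padZeros (hs : s.card ≤ N) : (padZeros N s).card = N := by
  simp [padZeros, hs]

lemma prod_factorial_count_padZeros {S : Finset ℕ} (hS : 0 ∉ S) (hs : ∀ a ∈ s, a ∈ S) :
    ∏ a ∈ (padZeros N s).toFinset, ((padZeros N s).count a).factorial =
      (∏ a ∈ S, (s.count a).factorial) * (N - s.card).factorial := by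
  have hsubset : (padZeros N s).toFinset ⊆ insert 0 S := by
    intro a ha
    rcases Multiset.mem_add.1 (Multiset.mem_toFinset.1 ha) with ha | ha
    · exact mem_insert_of_mem (hs a ha)
    · exact mem_insert.2 (Or.inl (Multiset.eq_of_mem_replicate ha))
  have hzero : (padZeros N s).count 0 = N - s.card := by
    simp [padZeros, Multiset.count_eq_zero.2 (mt (hs 0) hS)]
  have hpos {a : ℕ} (ha : a ∈ S) : (padZeros N s).count a = s.count a := by
    have hne : 0 ≠ a := fun h => hS (h ▸ ha)
    simp [padZeros, Multiset.count_replicate, hne]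
  rw [prod_subset hsubset fun a _ ha => by
      rw [Multiset.count_eq_zero.2 (mt Multiset.mem_toFinset.2 ha), Nat.factorial_zero],
    prod_insert hS, hzero, mul_comm, prod_congr rfl fun a ha => by rw [hpos ha]]

end PadZeros

section Arrangements

variable {ι α : Type*} [Fintype ι]

lemma count_map_univ_val [DecidableEq α] (f : ι → α) (a : α) :
    (univ.val.map f).count a = #{i | f i = a} := by
  simp only [Multiset.count_map, Finset.card_def, Finset.filter_val, eq_comm]

lemma map_univ_val_eq_iff_exists_perm {f g : ι → α} :
    univ.val.map f = univ.val.map g ↔ ∃ σ : Equiv.Perm ι, g ∘ σ = f := by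
  classical
  constructor
  · intro h
    have fiberEquiv (a : α) : Nonempty ({i // f i = a} ≃ {i // g i = a}) := by
      have hcount := congrArg (Multiset.count a) h
      rwa [count_map_univ_val, count_map_univ_val, ← Fintype.card_subtype, ← Fintype.card_subtype,
        Fintype.card_eq] at hcount
    exact ⟨Equiv.ofFiberEquiv fun a => (fiberEquiv a).some,
      funext fun i => Equiv.ofFiberEquiv_map _ i⟩
  · rintro ⟨σ, rfl⟩
    rw [← Multiset.map_map, Multiset.map_univ_val_equiv]

lemma exists_map_univ_val_eq {M : Multiset α} (hM : M.card = Fintype.card ι) :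
    ∃ f : ι → α, univ.val.map f = M := by
  classical
  obtain ⟨e⟩ : Nonempty (ι ≃ M) := by rw [← Fintype.card_eq, Multiset.card_coe, hM]
  refine ⟨fun i => (e i).1, ?_⟩
  rw [← Function.comp_def (fun x : M => x.1) e, ← Multiset.map_map, Multiset.map_univ_val_equiv,
    Multiset.map_univ_coe]

lemma existsUnique_monotone_map_univ_val_eq [LinearOrder α] {n : ℕ} {M : Multiset α}
    (hM : M.card = n) : ∃! p : Fin n → α, Monotone p ∧ univ.val.map p = M := by
  obtain ⟨f, rfl⟩ := exists_map_univ_val_eq (ι := Fin n) (by simpa using hM)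
  refine ⟨f ∘ Tuple.sort f, ⟨Tuple.monotone_sort f, ?_⟩, ?_⟩
  · exact map_univ_val_eq_iff_exists_perm.2 ⟨_, rfl⟩
  · rintro q ⟨hq, hqf⟩
    obtain ⟨σ, rfl⟩ := map_univ_val_eq_iff_exists_perm.1 hqf
    exact Tuple.unique_monotone hq (Tuple.monotone_sort f)

-- Orbit-stabilizer for the action of the permutations of `ι` on words.
lemma card_map_univ_val_eq_mul_prod_factorial_count [DecidableEq α] {M : Multiset α}
    (hM : M.card = Fintype.card ι) :
    Nat.card {f : ι → α // univ.val.map f = M} * ∏ a ∈ M.toFinset, (M.count a).factorial =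
      (Fintype.card ι).factorial := by
  classical
  obtain ⟨f, rfl⟩ := exists_map_univ_val_eq hM
  have horbit : MulAction.orbit (Equiv.Perm ι)ᵈᵐᵃ f = {g | univ.val.map g = univ.val.map f} := by
    ext g
    rw [Set.mem_ofPred_eq, map_univ_val_eq_iff_exists_perm]
    exact DomMulAct.mk.symm.exists_congr_left
  have hstab : Nat.card (MulAction.stabilizer (Equiv.Perm ι)ᵈᵐᵃ f) =
      ∏ a ∈ (univ.val.map f).toFinset, ((univ.val.map f).count a).factorial := by
    have hperm : Nat.card (MulAction.stabilizer (Equiv.Perm ι)ᵈᵐᵃ f) =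
        Nat.card {σ : Equiv.Perm ι // f ∘ σ = f} :=
      Nat.card_congr (DomMulAct.mk.symm.subtypeEquiv fun _ => DomMulAct.mem_stabilizer_iff)
    rw [hperm, Nat.card_eq_fintype_card, DomMulAct.stabilizer_card']
    simp only [count_map_univ_val, Fintype.card_subtype]
    rfl
  have hprod := Nat.card_congr (MulAction.orbitProdStabilizerEquivGroup (Equiv.Perm ι)ᵈᵐᵃ f)
  rwa [Nat.card_prod, hstab, horbit, Nat.card_congr DomMulAct.mk.symm, Nat.card_perm,
    Nat.card_eq_fintype_card (α := ι)] at hprod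

end Arrangements

section CycleLemma

/-- The sum of the first `k` letters of a cyclic word, read from position `0`; the index `k` may
exceed the length of the word, which is then read periodically. -/
def partialSum {N : ℕ} {A : Type*} [AddCommMonoid A] (c : ZMod N → A) (k : ℕ) : A :=
  ∑ i ∈ range k, c i

/-- The ballot condition on cyclic words: the partial sums dominate the sequence `0, 1, 2, …` before
the word closes up. -/
def IsBallot {N : ℕ} (c : ZMod N → ℕ) : Prop :=
  ∀ k < N, k ≤ partialSum c k

lemma partialSum_add {N : ℕ} {A : Type*} [AddCommMonoid A] (c : ZMod N → A) (a b : ℕ) :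
    partialSum c (a + b) = partialSum c a + partialSum (fun x => c ((a : ZMod N) + x)) b := by
  simp only [partialSum, sum_range_add, Nat.cast_add]

variable {N : ℕ} [NeZero N]

lemma partialSum_self {A : Type*} [AddCommMonoid A] (c : ZMod N → A) :
    partialSum c N = ∑ x, c x :=
  sum_bij' (fun i _ => (i : ZMod N)) (fun x _ => x.val) (by simp)
    (fun x _ => mem_range.2 x.val_lt) (fun i hi => ZMod.val_cast_of_lt (mem_range.1 hi))
    (by simp) (by simp)

lemma partialSum_add_self {A : Type*} [AddCommMonoid A] (c : ZMod N → A) (k : ℕ) :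
    partialSum c (k + N) = partialSum c k + ∑ x, c x := by
  simp [add_comm k, partialSum_add, partialSum_self, add_comm (partialSum c k)]

-- The unique solution is the first position in `[0, N)` at which `S` is minimal.
lemma existsUnique_lt_forall_le_add {S : ℕ → ℤ} (hS : ∀ k, S (k + N) = S k - 1) :
    ∃! r, r < N ∧ ∀ k < N, S r ≤ S (r + k) := by
  apply existsUnique_of_exists_of_unique
  · obtain ⟨r, hr, hmin⟩ := exists_min_image (range N) (fun k => toLex (S k, k))
      (nonempty_range_iff.2 (NeZero.ne N))
    simp only [mem_range, Prod.Lex.toLex_le_toLex] at hr hmin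
    refine ⟨r, hr, fun k hk => ?_⟩
    rcases lt_or_ge (r + k) N with hrk | hrk
    · have := hmin _ hrk
      omega
    · obtain ⟨s, hs⟩ := Nat.exists_eq_add_of_le' hrk
      have := hmin s (by omega)
      rw [hs, hS]
      omega
  · have first_not_lt {r s : ℕ} (hs : s < N) (hminr : ∀ k < N, S r ≤ S (r + k))
        (hmins : ∀ k < N, S s ≤ S (s + k)) : ¬ r < s := by
      intro hrs
      have hle : S r ≤ S s := by
        simpa [Nat.add_sub_cancel' hrs.le] using hminr (s - r) (by omega)
      have hge : S s ≤ S r - 1 := by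
        rw [← hS, show r + N = s + (N - (s - r)) by omega]
        exact hmins _ (by omega)
      omega
    rintro r s ⟨hr, hminr⟩ ⟨hs, hmins⟩
    have hsr := first_not_lt hr hmins hminr
    have hrs := first_not_lt hs hminr hmins
    omega

theorem existsUnique_shift_partialSum_nonneg {f : ZMod N → ℤ} (hf : ∑ x, f x = -1) :
    ∃! r : ZMod N, ∀ k < N, 0 ≤ partialSum (fun x => f (r + x)) k := by
  obtain ⟨r, ⟨hr, hmin⟩, huniq⟩ := existsUnique_lt_forall_le_add (S := partialSum f)
    fun k => by rw [partialSum_add_self, hf]; rfl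
  have nonneg_iff (s : ZMod N) (k : ℕ) : 0 ≤ partialSum (fun x => f (s + x)) k ↔
      partialSum f s.val ≤ partialSum f (s.val + k) := by
    simp [partialSum_add]
  simp only [nonneg_iff]
  refine ⟨r, by simpa only [ZMod.val_cast_of_lt hr] using hmin, fun s hs => ?_⟩
  rw [← huniq s.val ⟨s.val_lt, hs⟩, ZMod.natCast_zmod_val]

lemma existsUnique_shift_isBallot {c : ZMod N → ℕ} (hc : ∑ x, c x + 1 = N) :
    ∃! r : ZMod N, IsBallot fun x => c (r + x) := by
  have hsum : ∑ x, ((c x : ℤ) - 1) = -1 := by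
    rw [sum_sub_distrib, ← Nat.cast_sum]
    simp only [sum_const, card_univ, ZMod.card, nsmul_one]
    omega
  simpa [IsBallot, partialSum, ← Nat.cast_sum] using existsUnique_shift_partialSum_nonneg hsum

lemma card_mul_card_of_existsUnique_vadd {G X : Type*} [AddGroup G] [AddAction G X]
    {P Q : X → Prop} (hQ : ∀ (g : G) (x : X), Q x → Q (g +ᵥ x))
    (hP : ∀ x, Q x → ∃! g : G, P (g +ᵥ x)) :
    Nat.card G * Nat.card {x // Q x ∧ P x} = Nat.card {x // Q x} := by
  rw [← Nat.card_prod]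
  refine Nat.card_congr (Equiv.ofBijective (fun y => ⟨y.1 +ᵥ y.2.1, hQ _ _ y.2.2.1⟩) ⟨?_, ?_⟩)
  · rintro ⟨g, x, hx⟩ ⟨h, y, hy⟩ hgh
    replace hgh : g +ᵥ x = h +ᵥ y := congrArg Subtype.val hgh
    obtain rfl : g = h := neg_injective <|
      (hP _ (hQ g x hx.1)).unique (by simpa using hx.2) (by simpa [hgh] using hy.2)
    simpa using hgh
  · rintro ⟨x, hx⟩
    obtain ⟨g, hg, -⟩ := hP x hx
    exact ⟨⟨-g, g +ᵥ x, hQ g x hx, hg⟩, by simp⟩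

lemma mul_card_isBallot_eq_card {M : Multiset ℕ} (hM : M.sum + 1 = N) :
    N * Nat.card {c : ZMod N → ℕ // univ.val.map c = M ∧ IsBallot c} =
      Nat.card {c : ZMod N → ℕ // univ.val.map c = M} := by
  have hrot := card_mul_card_of_existsUnique_vadd (G := (ZMod N)ᵈᵃᵃ) (P := IsBallot)
    (Q := fun c : ZMod N → ℕ => univ.val.map c = M)
    (fun g c hc =>
      (map_univ_val_eq_iff_exists_perm.2 ⟨Equiv.addLeft (DomAddAct.mk.symm g), rfl⟩).trans hc)
    fun c hc => by
      have hsum : ∑ x, c x + 1 = N := by rw [sum_eq_multiset_sum, hc, hM]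
      exact DomAddAct.mk.existsUnique_congr_right.1 (existsUnique_shift_isBallot hsum)
  rwa [Nat.card_congr DomAddAct.mk.symm, Nat.card_zmod] at hrot

end CycleLemma

section Content

variable {N : ℕ}

/-- The content of a tuple with values in `{1, …, N}`: the word of its multiplicities. Position `x`
of the word stands for the value `x.val + 1`. -/
def content {ι : Type*} [Fintype ι] (N : ℕ) (p : ι → ℕ) (x : ZMod N) : ℕ :=
  #{j | p j = x.val + 1}

lemma exists_val_add_one_eq {a : ℕ} (ha : a ∈ Icc 1 N) : ∃ x : ZMod N, x.val + 1 = a := by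
  rw [mem_Icc] at ha
  exact ⟨(a - 1 : ℕ), by rw [ZMod.val_cast_of_lt (by omega)]; omega⟩

lemma partialSum_content {ι : Type*} [Fintype ι] {p : ι → ℕ} (hp : ∀ j, 0 < p j) {k : ℕ}
    (hk : k ≤ N) : partialSum (content N p) k = #{j | p j ≤ k} := by
  classical
  have hfiber := card_eq_sum_card_fiberwise (s := univ.filter fun j => p j ≤ k)
    (t := range k) (f := fun j => p j - 1) (fun j hj => by
      have := hp j
      simp only [coe_filter, mem_univ, true_and, Set.mem_ofPred_eq, coe_range, Set.mem_Iio] at hj ⊢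
      omega)
  rw [hfiber]
  refine sum_congr rfl fun i hi => ?_
  rw [mem_range] at hi
  rw [content, ZMod.val_cast_of_lt (by omega), filter_filter]
  congr 1 with j
  have := hp j
  simp only [mem_filter, mem_univ, true_and]
  omega

variable [NeZero N]

lemma map_val_add_one_univ_val : univ.val.map (fun x : ZMod N => x.val + 1) = (Icc 1 N).val := by
  have hinj : Function.Injective fun x : ZMod N => x.val + 1 :=
    (add_left_injective 1).comp (ZMod.val_injective N)
  rw [← image_val_of_injOn hinj.injOn]
  congr 1 with a
  rw [mem_image_univ_iff_mem_range]
  refine ⟨?_, exists_val_add_one_eq⟩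
  rintro ⟨x, rfl⟩
  exact mem_Icc.2 ⟨Nat.le_add_left 1 _, x.val_lt⟩

/-- The multiset of values with content `c`: the value `x.val + 1` occurs `c x` times. Sorting it
recovers a weakly increasing tuple from its content. -/
def multisetOfContent (c : ZMod N → ℕ) : Multiset ℕ :=
  ∑ x, Multiset.replicate (c x) (x.val + 1)

lemma card_multisetOfContent (c : ZMod N → ℕ) : (multisetOfContent c).card = ∑ x, c x := by
  simp [multisetOfContent]

lemma count_multisetOfContent (c : ZMod N → ℕ) (x : ZMod N) :
    (multisetOfContent c).count (x.val + 1) = c x := by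
  simp [multisetOfContent, Multiset.count_sum', Multiset.count_replicate,
    (ZMod.val_injective N).eq_iff]

lemma mem_Icc_of_mem_multisetOfContent {c : ZMod N → ℕ} {a : ℕ} (ha : a ∈ multisetOfContent c) :
    a ∈ Icc 1 N := by
  obtain ⟨x, -, hx⟩ := Multiset.mem_sum.1 ha
  rw [Multiset.eq_of_mem_replicate hx, mem_Icc]
  exact ⟨Nat.le_add_left 1 _, x.val_lt⟩

lemma map_univ_val_eq_multisetOfContent_iff {ι : Type*} [Fintype ι] {p : ι → ℕ} {c : ZMod N → ℕ} :
    univ.val.map p = multisetOfContent c ↔ (∀ j, p j ∈ Icc 1 N) ∧ content N p = c := by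
  constructor
  · intro h
    refine ⟨fun j => mem_Icc_of_mem_multisetOfContent (c := c) (by simp [← h]), funext fun x => ?_⟩
    rw [content, ← count_map_univ_val, h, count_multisetOfContent]
  · rintro ⟨hp, rfl⟩
    ext a
    by_cases ha : a ∈ Icc 1 N
    · obtain ⟨x, rfl⟩ := exists_val_add_one_eq ha
      rw [count_multisetOfContent, count_map_univ_val, content]
    · rw [Multiset.count_eq_zero.2 (mt mem_Icc_of_mem_multisetOfContent ha),
        Multiset.count_eq_zero.2]
      simpa using fun j (hj : p j = a) => ha (hj ▸ hp j)

end Content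

section SortedPF

variable {n : ℕ}

lemma isSortedPF_iff_isBallot_content {p : Fin n → ℕ} :
    IsSortedPF n p ↔
      Monotone p ∧ (∀ j, p j ∈ Icc 1 (n + 1)) ∧ IsBallot (content (n + 1) p) := by
  have lt_card_iff (hp : Monotone p) (i : Fin n) :
      (i : ℕ) < #{j | p j ≤ i + 1} ↔ p i ≤ i + 1 :=
    Tuple.lt_card_le_iff_apply_le_of_monotone hp
  constructor
  · rintro ⟨hmono, hp⟩
    refine ⟨hmono, fun j => mem_Icc.2 ⟨(hp j).1, (hp j).2.trans (by omega)⟩, fun k hk => ?_⟩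
    rw [partialSum_content (fun j => (hp j).1) hk.le]
    rcases k with - | i
    · exact Nat.zero_le _
    · exact (lt_card_iff hmono ⟨i, by omega⟩).2 (hp _).2
  · rintro ⟨hmono, hp, hballot⟩
    have hpos (j : Fin n) : 0 < p j := (mem_Icc.1 (hp j)).1
    refine ⟨hmono, fun i => ⟨hpos i, (lt_card_iff hmono i).1 ?_⟩⟩
    have := hballot (i + 1) (by omega)
    rwa [partialSum_content hpos (by omega)] at this

lemma existsUnique_isSortedPF_content_eq {c : ZMod (n + 1) → ℕ} (hsum : ∑ x, c x = n)
    (hc : IsBallot c) : ∃! p, IsSortedPF n p ∧ content (n + 1) p = c := by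
  have hiff (p : Fin n → ℕ) : Monotone p ∧ univ.val.map p = multisetOfContent c ↔
      IsSortedPF n p ∧ content (n + 1) p = c := by
    rw [map_univ_val_eq_multisetOfContent_iff, isSortedPF_iff_isBallot_content]
    constructor
    · rintro ⟨hmono, hp, rfl⟩
      exact ⟨⟨hmono, hp, hc⟩, rfl⟩
    · rintro ⟨⟨hmono, hp, -⟩, hpc⟩
      exact ⟨hmono, hp, hpc⟩
  simpa only [hiff] using
    existsUnique_monotone_map_univ_val_eq ((card_multisetOfContent c).trans hsum)

end SortedPF

section Shape

lemma filter_pos_map_card_fiber {ι β : Type*} [Fintype ι] [DecidableEq β] {p : ι → β}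
    {s : Finset β} (hp : ∀ j, p j ∈ s) :
    (s.val.map fun k => #{j | p j = k}).filter (0 < ·) =
      (univ.image p).val.map fun k => #{j | p j = k} := by
  rw [Multiset.filter_map, ← filter_val]
  congr 2
  ext k
  simp only [mem_filter, Function.comp_apply, card_pos, filter_nonempty_iff, mem_image]
  exact and_iff_right_of_imp fun ⟨j, _, hj⟩ => hj ▸ hp j

variable {n : ℕ} {p : Fin n → ℕ}

lemma IsSortedPF.mem_Icc (hp : IsSortedPF n p) (j : Fin n) : p j ∈ Icc 1 n :=
  Finset.mem_Icc.2 ⟨(hp.2 j).1, (hp.2 j).2.trans j.isLt⟩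

lemma card_shapeOf (hp : ∀ j, p j ∈ Icc 1 n) : (shapeOf n p).card = #(univ.image p) := by
  rw [shapeOf, filter_pos_map_card_fiber hp, Multiset.card_map, card_val]

lemma shapeOf_eq_filter_content (hp : ∀ j, p j ∈ Icc 1 n) :
    shapeOf n p = (univ.val.map (content (n + 1) p)).filter (0 < ·) := by
  have hcontent : univ.val.map (content (n + 1) p) =
      (Icc 1 (n + 1)).val.map fun k => #{j | p j = k} := by
    rw [← map_val_add_one_univ_val, Multiset.map_map]
    rfl
  rw [hcontent, shapeOf, filter_pos_map_card_fiber hp,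
    filter_pos_map_card_fiber fun j => Icc_subset_Icc_right n.le_succ (hp j)]

lemma map_content_eq_padZeros_iff (hp : ∀ j, p j ∈ Icc 1 n) {t : Multiset ℕ} (ht : 0 ∉ t) :
    univ.val.map (content (n + 1) p) = padZeros (n + 1) t ↔ shapeOf n p = t := by
  rw [shapeOf_eq_filter_content hp, filter_pos_eq_iff_eq_padZeros ht]
  simp

end Shape

section Kreweras

variable {n : ℕ} (μ : n.Partition)

lemma zero_notMem_parts : 0 ∉ μ.parts := fun h => (μ.parts_pos h).false

lemma card_parts_le : μ.parts.card ≤ n := by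
  have h := Multiset.card_nsmul_le_sum (s := μ.parts) (a := 1) fun x hx => μ.parts_pos hx
  simpa [μ.parts_sum] using h

lemma card_isSortedPF_shapeOf_eq :
    Nat.card {p : Fin n → ℕ // IsSortedPF n p ∧ shapeOf n p = μ.parts} =
      Nat.card {c : ZMod (n + 1) → ℕ //
        univ.val.map c = padZeros (n + 1) μ.parts ∧ IsBallot c} := by
  have map_content_iff {p : Fin n → ℕ} (hp : IsSortedPF n p) :=
    map_content_eq_padZeros_iff hp.mem_Icc (zero_notMem_parts μ)
  refine Nat.card_congr (Equiv.ofBijective (fun p => ⟨content (n + 1) p.1,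
    (map_content_iff p.2.1).2 p.2.2, (isSortedPF_iff_isBallot_content.1 p.2.1).2.2⟩) ?_)
  rw [Function.bijective_iff_existsUnique]
  rintro ⟨c, hc, hballot⟩
  have hsum : ∑ x, c x = n := by
    rw [sum_eq_multiset_sum, hc, sum_padZeros, μ.parts_sum]
  obtain ⟨p, ⟨hp, rfl⟩, huniq⟩ := existsUnique_isSortedPF_content_eq hsum hballot
  exact ⟨⟨p, hp, (map_content_iff hp).1 hc⟩, rfl,
    fun q hq => Subtype.ext (huniq q.1 ⟨q.2.1, congrArg Subtype.val hq⟩)⟩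

lemma succ_mul_card_isSortedPF_shapeOf_mul :
    (n + 1) * Nat.card {p : Fin n → ℕ // IsSortedPF n p ∧ shapeOf n p = μ.parts} *
      ((∏ i ∈ Icc 1 n, (μ.parts.count i).factorial) * (n + 1 - μ.parts.card).factorial) =
      (n + 1).factorial := by
  have hsubset : ∀ a ∈ μ.parts, a ∈ Icc 1 n := fun a ha =>
    mem_Icc.2 ⟨μ.parts_pos ha, μ.parts_sum ▸ Multiset.le_sum_of_mem ha⟩
  have hcard : (padZeros (n + 1) μ.parts).card = Fintype.card (ZMod (n + 1)) := by
    rw [card_padZeros ((card_parts_le μ).trans n.le_succ), ZMod.card]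
  rw [card_isSortedPF_shapeOf_eq, mul_card_isBallot_eq_card (by rw [sum_padZeros, μ.parts_sum]),
    ← prod_factorial_count_padZeros (by simp) hsubset,
    card_map_univ_val_eq_mul_prod_factorial_count hcard, ZMod.card]

theorem card_isSortedPF_shapeOf_eq_krew :
    (Nat.card {p : Fin n → ℕ // IsSortedPF n p ∧ shapeOf n p = μ.parts} : ℚ) = krew n μ := by
  have hcount := congrArg (Nat.cast : ℕ → ℚ) (succ_mul_card_isSortedPF_shapeOf_mul μ)
  have hlen := card_parts_le μ
  rw [Nat.sub_add_comm hlen, Nat.factorial_succ, Nat.factorial_succ] at hcount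
  push_cast [hlen] at hcount
  have hden : (n : ℚ) - μ.parts.card + 1 ≠ 0 := by
    rw [← Nat.cast_sub hlen]
    positivity
  have hprod : ∏ i ∈ Icc 1 n, ((μ.parts.count i).factorial : ℚ) ≠ 0 := by positivity
  rw [krew]
  field_simp
  apply mul_left_cancel₀ (Nat.cast_add_one_ne_zero n : (n : ℚ) + 1 ≠ 0)
  linear_combination hcount

end Kreweras

section SignVectors

lemma card_signs_eq_two_pow {ι : Type*} [Finite ι] (s : Finset ι) :
    Nat.card {σ : ι → ℤ // ∀ k, (σ k = -1 ∨ σ k = 0 ∨ σ k = 1) ∧ (σ k = 0 ↔ k ∉ s)} =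
      2 ^ #s := by
  classical
  cases nonempty_fintype ι
  rw [Nat.subtype_card (Fintype.piFinset fun k => if k ∈ s then {-1, 1} else {0})]
  · have hcard (k : ι) : #(if k ∈ s then {-1, 1} else {0} : Finset ℤ) = if k ∈ s then 2 else 1 := by
      split_ifs <;> rfl
    simp [hcard]
  · intro σ
    rw [Fintype.mem_piFinset]
    refine forall_congr' fun k => ?_
    by_cases hk : k ∈ s
    · simp only [hk, if_true, mem_insert, mem_singleton, not_true_eq_false, iff_false]
      omega
    · simp only [hk, if_false, mem_singleton, not_false_eq_true, iff_true]
      omega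

lemma card_isSignVector {n : ℕ} {p : Fin n → ℕ} (hp : ∀ j, p j ∈ Icc 1 n) :
    Nat.card {σ : Fin n → ℤ // IsSignVector n p σ} = 2 ^ #(univ.image p) := by
  have himage : ({k | ∃ j, p j = k.val + 1} : Finset (Fin n)).image (fun k => k.val + 1) =
      univ.image p := by
    ext a
    simp only [mem_image, mem_filter, mem_univ, true_and]
    constructor
    · rintro ⟨k, ⟨j, hj⟩, rfl⟩
      exact ⟨j, hj⟩
    · rintro ⟨j, rfl⟩
      have hj := mem_Icc.1 (hp j)
      have hpred : p j - 1 + 1 = p j := Nat.sub_add_cancel hj.1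
      exact ⟨⟨p j - 1, by omega⟩, ⟨j, hpred.symm⟩, hpred⟩
  have hinj : Function.Injective fun k : Fin n => k.val + 1 :=
    (add_left_injective 1).comp Fin.val_injective
  rw [← himage, card_image_of_injective _ hinj, ← card_signs_eq_two_pow]
  simp [IsSignVector]

end SignVectors

lemma card_prod_subtype_of_card_fiber {α β : Type*} {P : α → Prop} {Q : α → β → Prop} {m : ℕ}
    (hm : m ≠ 0) (hQ : ∀ a, P a → Nat.card {b // Q a b} = m) :
    Nat.card {x : α × β // P x.1 ∧ Q x.1 x.2} = m * Nat.card {a // P a} := by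
  let fiberEquiv (a : {a // P a}) : {b // Q a b} ≃ Fin m :=
    (Nat.equivFinOfCardPos (by rwa [hQ a a.2])).trans (finCongr (hQ a a.2))
  let sigmaEquiv : {x : α × β // P x.1 ∧ Q x.1 x.2} ≃ Σ a : {a // P a}, {b // Q a b} :=
    { toFun := fun x => ⟨⟨x.1.1, x.2.1⟩, ⟨x.1.2, x.2.2⟩⟩
      invFun := fun y => ⟨(y.1, y.2), y.1.2, y.2.2⟩ }
  rw [Nat.card_congr (sigmaEquiv.trans (Equiv.sigmaEquivProdOfEquiv fiberEquiv)), Nat.card_prod,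
    Nat.card_fin, mul_comm]

/-- For each sorted parking function `p` with `ℓ` distinct values (i.e. `ℓ`
parts in its shape), there are exactly `2^ℓ` valid sign vectors; consequently,
the number of sorted naive shifted parking functions of size `n` of shape `μ`
is `2^{ℓ(μ)} · Krew(μ)`. -/
theorem card_signVectors_and_card_by_shape (n : ℕ) :
    (∀ p : Fin n → ℕ, IsSortedPF n p →
      Nat.card {σ : Fin n → ℤ // IsSignVector n p σ} =
        2 ^ (Finset.image p Finset.univ).card) ∧
    ∀ μ : n.Partition,
      (Nat.card {pσ : (Fin n → ℕ) × (Fin n → ℤ) //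
          IsSortedPF n pσ.1 ∧ IsSignVector n pσ.1 pσ.2 ∧ shapeOf n pσ.1 = μ.parts} : ℚ) =
        2 ^ μ.parts.card * krew n μ := by
  refine ⟨fun p hp => card_isSignVector hp.mem_Icc, fun μ => ?_⟩
  have card_signs (p : Fin n → ℕ) (hp : IsSortedPF n p ∧ shapeOf n p = μ.parts) :
      Nat.card {σ : Fin n → ℤ // IsSignVector n p σ} = 2 ^ μ.parts.card := by
    rw [card_isSignVector hp.1.mem_Icc, ← card_shapeOf hp.1.mem_Icc, hp.2]
  have hpairs := card_prod_subtype_of_card_fiber (by positivity) card_signs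
  simp only [and_assoc, and_comm (a := shapeOf n _ = μ.parts)] at hpairs
  rw [hpairs, ← card_isSortedPF_shapeOf_eq_krew]
  push_cast
  rfl
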